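/- arXiv:1204.4794 — 6 statements merged into one kernel-verified Lean document; each statement's English description precedes it below -/
import Mathlib

section
/- Let U ⊆ ℝ² be open, and let f₁, f₂, θ₁, θ₂, Ψ : U → ℝ be smooth with f₁, f₂ nowhere zero. Define b = -θ₁θ₂ + (1/f₂)∂₂θ₁ and c = θ₁θ₂ + (1/f₁)∂₁θ₂, and let A₁, A₂ : U → M₅(ℝ) be the matrix-valued functions A₁ = [[θ₁/2, -(1+Ψ)/2, b/2, θ₁/2, 0],[1,0,0,-1,(1+Ψ)/2],[0,0,0,0,-b/2],[0,1,0,0,-θ₁/2],[0,-1,0,0,-θ₁/2]] and A₂ = [[-θ₂/2, -c/2, -(1-Ψ)/2, θ₂/2, 0],[0,0,0,0,c/2],[1,0,0,1,(1-Ψ)/2],[0,0,-1,0,-θ₂/2],[0,0,-1,0,θ₂/2]]. Then the coordinate form of the structural equation dω + (1/2)[ω,ω] = 0 for the matrix-valued 1-form ω = f₁A₁ dx₁ + f₂A₂ dx₂, namely the matrix identity ∂₁(f₂A₂) - ∂₂(f₁A₁) + f₁f₂(A₁A₂ - A₂A₁) = 0 on U, holds if and only if the following four scalar equations hold on U: (E1)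 ∂₂f₁ + (1/2)f₁f₂θ₂ = 0; (E2) ∂₁f₂ - (1/2)f₁f₂θ₁ = 0; (E3) f₁∂₂Ψ - f₂∂₁c - f₁f₂(cθ₁ + θ₂(Ψ+2)) = 0; (E4) -f₁∂₂b + f₂∂₁Ψ + f₁f₂(bθ₂ + θ₁(Ψ-2)) = 0. -/
open scoped Topology

/-- Partial derivative in the first coordinate. -/
noncomputable def pd1 (g : ℝ × ℝ → ℝ) (p : ℝ × ℝ) : ℝ := fderiv ℝ g p (1, 0)

/-- Partial derivative in the second coordinate. -/
noncomputable def pd2 (g : ℝ × ℝ → ℝ) (p : ℝ × ℝ) : ℝ := fderiv ℝ g p (0, 1)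

/-- Entrywise partial derivative in the first coordinate of a matrix-valued map. -/
noncomputable def pd1M (M : ℝ × ℝ → Matrix (Fin 5) (Fin 5) ℝ) (p : ℝ × ℝ) :
    Matrix (Fin 5) (Fin 5) ℝ := Matrix.of fun i j => pd1 (fun q => M q i j) p

/-- Entrywise partial derivative in the second coordinate of a matrix-valued map. -/
noncomputable def pd2M (M : ℝ × ℝ → Matrix (Fin 5) (Fin 5) ℝ) (p : ℝ × ℝ) :
    Matrix (Fin 5) (Fin 5) ℝ := Matrix.of fun i j => pd2 (fun q => M q i j) p

/-- b = -θ₁θ₂ + (1/f₂)∂₂θ₁ -/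
noncomputable def bfun (f₂ θ₁ θ₂ : ℝ × ℝ → ℝ) : ℝ × ℝ → ℝ :=
  fun p => -θ₁ p * θ₂ p + (1 / f₂ p) * pd2 θ₁ p

/-- c = θ₁θ₂ + (1/f₁)∂₁θ₂ -/
noncomputable def cfun (f₁ θ₁ θ₂ : ℝ × ℝ → ℝ) : ℝ × ℝ → ℝ :=
  fun p => θ₁ p * θ₂ p + (1 / f₁ p) * pd1 θ₂ p

/-- The matrix A₁. -/
noncomputable def A1 (θ₁ Ψ b : ℝ × ℝ → ℝ) (p : ℝ × ℝ) : Matrix (Fin 5) (Fin 5) ℝ :=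
  !![θ₁ p / 2, -(1 + Ψ p) / 2, b p / 2, θ₁ p / 2, 0;
     1, 0, 0, -1, (1 + Ψ p) / 2;
     0, 0, 0, 0, -(b p) / 2;
     0, 1, 0, 0, -(θ₁ p) / 2;
     0, -1, 0, 0, -(θ₁ p) / 2]

/-- The matrix A₂. -/
noncomputable def A2 (θ₂ Ψ c : ℝ × ℝ → ℝ) (p : ℝ × ℝ) : Matrix (Fin 5) (Fin 5) ℝ :=
  !![-(θ₂ p) / 2, -(c p) / 2, -(1 - Ψ p) / 2, θ₂ p / 2, 0;
     0, 0, 0, 0, c p / 2;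
     1, 0, 0, 1, (1 - Ψ p) / 2;
     0, 0, -1, 0, -(θ₂ p) / 2;
     0, 0, -1, 0, θ₂ p / 2]

/-- The Leibniz rule for `f • A₂`, entrywise in the first coordinate. -/
theorem pd1M_smul_A2 {f θ Ψ c : ℝ × ℝ → ℝ} {p : ℝ × ℝ}
    (hf : DifferentiableAt ℝ f p) (hθ : DifferentiableAt ℝ θ p)
    (hΨ : DifferentiableAt ℝ Ψ p) (hc : DifferentiableAt ℝ c p) :
    pd1M (fun q => f q • A2 θ Ψ c q) p = pd1 f p • A2 θ Ψ c p + f p •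
      !![-(pd1 θ p) / 2, -(pd1 c p) / 2, pd1 Ψ p / 2, pd1 θ p / 2, 0;
         0, 0, 0, 0, pd1 c p / 2;
         0, 0, 0, 0, -(pd1 Ψ p) / 2;
         0, 0, 0, 0, -(pd1 θ p) / 2;
         0, 0, 0, 0, pd1 θ p / 2] := by
  have key : ∀ k l m n : ℝ, pd1 (fun q => f q * (k + l * θ q + m * Ψ q + n * c q)) p =
      pd1 f p * (k + l * θ p + m * Ψ p + n * c p)
        + f p * (l * pd1 θ p + m * pd1 Ψ p + n * pd1 c p) := by
    intro k l m n
    have h := hf.hasFDerivAt.mul ((((hθ.hasFDerivAt.const_mul l).const_add k).add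
      (hΨ.hasFDerivAt.const_mul m)).add (hc.hasFDerivAt.const_mul n))
    refine (congrArg (fun L => L (1, 0)) h.fderiv).trans ?_
    simp [pd1]
    ring
  have entry : ∀ (i j : Fin 5) (k l m n : ℝ),
      (∀ q, A2 θ Ψ c q i j = k + l * θ q + m * Ψ q + n * c q) →
      pd1M (fun q => f q • A2 θ Ψ c q) p i j = pd1 f p * (k + l * θ p + m * Ψ p + n * c p)
        + f p * (l * pd1 θ p + m * pd1 Ψ p + n * pd1 c p) := by
    intro i j k l m n h
    simp only [← key, pd1M, Matrix.of_apply, Matrix.smul_apply, h, smul_eq_mul]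
  have coeff : ∀ (i j : Fin 5) (q : ℝ × ℝ), A2 θ Ψ c q i j =
      A2 0 0 0 0 i j + (A2 1 0 0 0 i j - A2 0 0 0 0 i j) * θ q
        + (A2 0 1 0 0 i j - A2 0 0 0 0 i j) * Ψ q
        + (A2 0 0 1 0 i j - A2 0 0 0 0 i j) * c q := by
    intro i j q
    fin_cases i <;> fin_cases j <;> simp [A2] <;> ring
  ext i j
  rw [entry i j _ _ _ _ (coeff i j)]
  fin_cases i <;> fin_cases j <;> simp [A2] <;> ring

/-- The Leibniz rule for `f • A₁`, entrywise in the second coordinate. -/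
theorem pd2M_smul_A1 {f θ Ψ b : ℝ × ℝ → ℝ} {p : ℝ × ℝ}
    (hf : DifferentiableAt ℝ f p) (hθ : DifferentiableAt ℝ θ p)
    (hΨ : DifferentiableAt ℝ Ψ p) (hb : DifferentiableAt ℝ b p) :
    pd2M (fun q => f q • A1 θ Ψ b q) p = pd2 f p • A1 θ Ψ b p + f p •
      !![pd2 θ p / 2, -(pd2 Ψ p) / 2, pd2 b p / 2, pd2 θ p / 2, 0;
         0, 0, 0, 0, pd2 Ψ p / 2;
         0, 0, 0, 0, -(pd2 b p) / 2;
         0, 0, 0, 0, -(pd2 θ p) / 2;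
         0, 0, 0, 0, -(pd2 θ p) / 2] := by
  have key : ∀ k l m n : ℝ, pd2 (fun q => f q * (k + l * θ q + m * Ψ q + n * b q)) p =
      pd2 f p * (k + l * θ p + m * Ψ p + n * b p)
        + f p * (l * pd2 θ p + m * pd2 Ψ p + n * pd2 b p) := by
    intro k l m n
    have h := hf.hasFDerivAt.mul ((((hθ.hasFDerivAt.const_mul l).const_add k).add
      (hΨ.hasFDerivAt.const_mul m)).add (hb.hasFDerivAt.const_mul n))
    refine (congrArg (fun L => L (0, 1)) h.fderiv).trans ?_
    simp [pd2]
    ring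
  have entry : ∀ (i j : Fin 5) (k l m n : ℝ),
      (∀ q, A1 θ Ψ b q i j = k + l * θ q + m * Ψ q + n * b q) →
      pd2M (fun q => f q • A1 θ Ψ b q) p i j = pd2 f p * (k + l * θ p + m * Ψ p + n * b p)
        + f p * (l * pd2 θ p + m * pd2 Ψ p + n * pd2 b p) := by
    intro i j k l m n h
    simp only [← key, pd2M, Matrix.of_apply, Matrix.smul_apply, h, smul_eq_mul]
  have coeff : ∀ (i j : Fin 5) (q : ℝ × ℝ), A1 θ Ψ b q i j =
      A1 0 0 0 0 i j + (A1 1 0 0 0 i j - A1 0 0 0 0 i j) * θ q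
        + (A1 0 1 0 0 i j - A1 0 0 0 0 i j) * Ψ q
        + (A1 0 0 1 0 i j - A1 0 0 0 0 i j) * b q := by
    intro i j q
    fin_cases i <;> fin_cases j <;> simp [A1] <;> ring
  ext i j
  rw [entry i j _ _ _ _ (coeff i j)]
  fin_cases i <;> fin_cases j <;> simp [A1] <;> ring

/-- A directional derivative of a smooth function is differentiable. -/
theorem differentiableAt_fderiv_apply {g : ℝ × ℝ → ℝ} {p : ℝ × ℝ}
    (hg : ContDiffAt ℝ (⊤ : ℕ∞) g p) (v : ℝ × ℝ) :
    DifferentiableAt ℝ (fun q => fderiv ℝ g q v) p :=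
  ((hg.fderiv_right (m := 1) (WithTop.coe_le_coe.2 (le_top : (1 + 1 : ℕ∞) ≤ ⊤))).differentiableAt
    one_ne_zero).clm_apply (differentiableAt_const v)

set_option maxHeartbeats 1000000 in
/-- The structural equation `∂₁(f₂A₂) - ∂₂(f₁A₁) + f₁f₂(A₁A₂ - A₂A₁) = 0` on an open set `U`
holds if and only if the four scalar equations (E1)–(E4) hold on `U`. -/
theorem structural_equation_iff_four_scalar_equations
    (U : Set (ℝ × ℝ)) (hU : IsOpen U)
    (f₁ f₂ θ₁ θ₂ Ψ : ℝ × ℝ → ℝ)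
    (hf₁ : ContDiffOn ℝ (⊤ : ℕ∞) f₁ U) (hf₂ : ContDiffOn ℝ (⊤ : ℕ∞) f₂ U)
    (hθ₁ : ContDiffOn ℝ (⊤ : ℕ∞) θ₁ U) (hθ₂ : ContDiffOn ℝ (⊤ : ℕ∞) θ₂ U)
    (hΨ : ContDiffOn ℝ (⊤ : ℕ∞) Ψ U)
    (hf₁0 : ∀ p ∈ U, f₁ p ≠ 0) (hf₂0 : ∀ p ∈ U, f₂ p ≠ 0) :
    (∀ p ∈ U,
        pd1M (fun q => f₂ q • A2 θ₂ Ψ (cfun f₁ θ₁ θ₂) q) p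
          - pd2M (fun q => f₁ q • A1 θ₁ Ψ (bfun f₂ θ₁ θ₂) q) p
          + (f₁ p * f₂ p) •
              (A1 θ₁ Ψ (bfun f₂ θ₁ θ₂) p * A2 θ₂ Ψ (cfun f₁ θ₁ θ₂) p
                - A2 θ₂ Ψ (cfun f₁ θ₁ θ₂) p * A1 θ₁ Ψ (bfun f₂ θ₁ θ₂) p) = 0)
      ↔ (∀ p ∈ U,
          pd2 f₁ p + (1 / 2) * f₁ p * f₂ p * θ₂ p = 0 ∧
          pd1 f₂ p - (1 / 2) * f₁ p * f₂ p * θ₁ p = 0 ∧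
          f₁ p * pd2 Ψ p - f₂ p * pd1 (cfun f₁ θ₁ θ₂) p
            - f₁ p * f₂ p * (cfun f₁ θ₁ θ₂ p * θ₁ p + θ₂ p * (Ψ p + 2)) = 0 ∧
          -(f₁ p) * pd2 (bfun f₂ θ₁ θ₂) p + f₂ p * pd1 Ψ p
            + f₁ p * f₂ p * (bfun f₂ θ₁ θ₂ p * θ₂ p + θ₁ p * (Ψ p - 2)) = 0) := by
  refine forall₂_congr fun p hp => ?_
  have hUp := hU.mem_nhds hp
  have smooth {g : ℝ × ℝ → ℝ} (hg : ContDiffOn ℝ (⊤ : ℕ∞) g U) : DifferentiableAt ℝ g p :=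
    (hg.contDiffAt hUp).differentiableAt (by simp)
  have hf₁p := hf₁0 p hp
  have hf₂p := hf₂0 p hp
  have hb : DifferentiableAt ℝ (bfun f₂ θ₁ θ₂) p := by
    unfold bfun
    simp only [one_div]
    exact ((smooth hθ₁).neg.mul (smooth hθ₂)).add
      (((smooth hf₂).inv hf₂p).mul
        (differentiableAt_fderiv_apply (hθ₁.contDiffAt hUp) (0, 1)))
  have hc : DifferentiableAt ℝ (cfun f₁ θ₁ θ₂) p := by
    unfold cfun
    simp only [one_div]
    exact ((smooth hθ₁).mul (smooth hθ₂)).add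
      (((smooth hf₁).inv hf₁p).mul
        (differentiableAt_fderiv_apply (hθ₂.contDiffAt hUp) (1, 0)))
  have hdθ₁ : pd2 θ₁ p = f₂ p * (bfun f₂ θ₁ θ₂ p + θ₁ p * θ₂ p) := by
    simp only [bfun]
    field_simp
    ring
  have hdθ₂ : pd1 θ₂ p = f₁ p * (cfun f₁ θ₁ θ₂ p - θ₁ p * θ₂ p) := by
    simp only [cfun]
    field_simp
    ring
  rw [pd1M_smul_A2 (smooth hf₂) (smooth hθ₂) (smooth hΨ) hc,
    pd2M_smul_A1 (smooth hf₁) (smooth hθ₁) (smooth hΨ) hb, hdθ₁, hdθ₂]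
  generalize bfun f₂ θ₁ θ₂ = b
  generalize cfun f₁ θ₁ θ₂ = c
  constructor
  · intro h
    have entry (i j : Fin 5) := congrFun (congrFun h i) j
    have h₁ := entry 1 0
    have h₂ := entry 2 0
    have h₃ := entry 0 1
    have h₄ := entry 0 2
    simp [A1, A2] at h₁ h₂ h₃ h₄
    have e₁ : pd2 f₁ p + (1 / 2) * f₁ p * f₂ p * θ₂ p = 0 := by linarith
    have e₂ : pd1 f₂ p - (1 / 2) * f₁ p * f₂ p * θ₁ p = 0 := by linarith
    refine ⟨e₁, e₂, ?_, ?_⟩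
    · linear_combination 2 * h₃ - (1 + Ψ p) * e₁ + c p * e₂
    · linear_combination 2 * h₄ + b p * e₁ + (1 - Ψ p) * e₂
  · rintro ⟨e₁, e₂, e₃, e₄⟩
    rw [show pd2 f₁ p = -((1 / 2) * f₁ p * f₂ p * θ₂ p) by linarith,
      show pd1 f₂ p = (1 / 2) * f₁ p * f₂ p * θ₁ p by linarith]
    ext i j
    fin_cases i <;> fin_cases j <;>
      simp [A1, A2, -mul_eq_zero] <;>
      first
        | ring1
        | linear_combination (1 / 2) * e₃
        | linear_combination (-1 / 2) * e₃
        | linear_combination (1 / 2) * e₄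
        | linear_combination (-1 / 2) * e₄
end

section
/- Let U ⊆ ℝ² be open and connected, let f₁, f₂, Ψ : U → ℝ be smooth with f₁, f₂ nowhere zero, and let θ₁, θ₂ be real constants. Set b = -θ₁θ₂ and c = θ₁θ₂ (these are the values of b = -θ₁θ₂ + ξ₂(θ₁) and c = θ₁θ₂ + ξ₁(θ₂) when θ₁, θ₂ are constant). If the structural equations (E1) ∂₂f₁ + (1/2)f₁f₂θ₂ = 0, (E2) ∂₁f₂ - (1/2)f₁f₂θ₁ = 0, (E3) f₁∂₂Ψ - f₂∂₁c - f₁f₂(cθ₁ + θ₂(Ψ+2)) = 0, (E4) -f₁∂₂b + f₂∂₁Ψ + f₁f₂(bθ₂ + θ₁(Ψ-2)) = 0 hold on U, then θ₁θ₂(θ₁² + θ₂² + 4) = 0. -/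
open scoped Topology

/-- The mixed partial derivatives of a twice continuously differentiable function agree. -/
theorem pd2_pd1_comm {g : ℝ × ℝ → ℝ} {p : ℝ × ℝ} (hg : ContDiffAt ℝ 2 g p) :
    pd2 (pd1 g) p = pd1 (pd2 g) p := by
  have hd : DifferentiableAt ℝ (fderiv ℝ g) p :=
    (hg.fderiv_right (m := 1) (by norm_num)).differentiableAt (by simp)
  have hmixed (v w : ℝ × ℝ) :
      fderiv ℝ (fun q => fderiv ℝ g q v) p w = fderiv ℝ (fderiv ℝ g) p w v := by
    rw [(hd.hasFDerivAt.clm_apply (hasFDerivAt_const v p)).fderiv]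
    simp
  exact (hmixed _ _).trans
    (((hg.isSymmSndFDerivAt (by simp)) _ _).trans (hmixed _ _).symm)

/-- If the conformal principal curvatures θ₁, θ₂ are constant and the structural
equations (E1)–(E4) (with b = -θ₁θ₂ and c = θ₁θ₂) hold on a connected open set, then
θ₁θ₂(θ₁² + θ₂² + 4) = 0. -/
theorem constant_thetas_relation
    (U : Set (ℝ × ℝ)) (hU : IsOpen U) (hUconn : IsConnected U)
    (f₁ f₂ Ψ : ℝ × ℝ → ℝ) (θ₁ θ₂ : ℝ)
    (hf₁ : ContDiffOn ℝ (⊤ : ℕ∞) f₁ U) (hf₂ : ContDiffOn ℝ (⊤ : ℕ∞) f₂ U)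
    (hΨ : ContDiffOn ℝ (⊤ : ℕ∞) Ψ U)
    (hf₁0 : ∀ p ∈ U, f₁ p ≠ 0) (hf₂0 : ∀ p ∈ U, f₂ p ≠ 0)
    (hE1 : ∀ p ∈ U, pd2 f₁ p + (1 / 2) * f₁ p * f₂ p * θ₂ = 0)
    (hE2 : ∀ p ∈ U, pd1 f₂ p - (1 / 2) * f₁ p * f₂ p * θ₁ = 0)
    (hE3 : ∀ p ∈ U, f₁ p * pd2 Ψ p - f₂ p * pd1 (fun _ => θ₁ * θ₂) p
      - f₁ p * f₂ p * ((θ₁ * θ₂) * θ₁ + θ₂ * (Ψ p + 2)) = 0)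
    (hE4 : ∀ p ∈ U, -(f₁ p) * pd2 (fun _ => -θ₁ * θ₂) p + f₂ p * pd1 Ψ p
      + f₁ p * f₂ p * ((-θ₁ * θ₂) * θ₂ + θ₁ * (Ψ p - 2)) = 0) :
    θ₁ * θ₂ * (θ₁ ^ 2 + θ₂ ^ 2 + 4) = 0 := by
  obtain ⟨p, hp⟩ := hUconn.nonempty
  have hUp : U ∈ 𝓝 p := hU.mem_nhds hp
  have d₁ : DifferentiableAt ℝ f₁ p := (hf₁.contDiffAt hUp).differentiableAt (by simp)
  have d₂ : DifferentiableAt ℝ f₂ p := (hf₂.contDiffAt hUp).differentiableAt (by simp)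
  have dΨ : DifferentiableAt ℝ Ψ p := (hΨ.contDiffAt hUp).differentiableAt (by simp)
  have hΨ₁ : ∀ q ∈ U, pd1 Ψ q = f₁ q * (θ₁ * θ₂ ^ 2 + 2 * θ₁ - θ₁ * Ψ q) := by
    intro q hq
    have h := hE4 q hq
    simp only [pd2, fderiv_fun_const, Pi.zero_apply, zero_apply] at h
    apply mul_left_cancel₀ (hf₂0 q hq)
    linear_combination h
  have hΨ₂ : ∀ q ∈ U, pd2 Ψ q = f₂ q * (θ₁ ^ 2 * θ₂ + 2 * θ₂ + θ₂ * Ψ q) := by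
    intro q hq
    have h := hE3 q hq
    simp only [pd1, fderiv_fun_const, Pi.zero_apply, zero_apply] at h
    apply mul_left_cancel₀ (hf₁0 q hq)
    linear_combination h
  have hsymm : pd2 (pd1 Ψ) p = pd1 (pd2 Ψ) p := pd2_pd1_comm
    ((hΨ.contDiffAt hUp).of_le (WithTop.coe_le_coe.2 le_top))
  have h₂₁ : pd2 (pd1 Ψ) p = f₁ p * (-(θ₁ * pd2 Ψ p))
      + (θ₁ * θ₂ ^ 2 + 2 * θ₁ - θ₁ * Ψ p) * pd2 f₁ p := by
    have hD := d₁.hasFDerivAt.mul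
      ((dΨ.hasFDerivAt.const_mul θ₁).const_sub (θ₁ * θ₂ ^ 2 + 2 * θ₁))
    have hev : pd1 Ψ =ᶠ[𝓝 p] fun q => f₁ q * (θ₁ * θ₂ ^ 2 + 2 * θ₁ - θ₁ * Ψ q) :=
      Filter.eventually_of_mem hUp hΨ₁
    rw [pd2, (hD.congr_of_eventuallyEq hev).fderiv]
    simp [pd2]
  have h₁₂ : pd1 (pd2 Ψ) p = f₂ p * (θ₂ * pd1 Ψ p)
      + (θ₁ ^ 2 * θ₂ + 2 * θ₂ + θ₂ * Ψ p) * pd1 f₂ p := by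
    have hD := d₂.hasFDerivAt.mul
      ((dΨ.hasFDerivAt.const_mul θ₂).const_add (θ₁ ^ 2 * θ₂ + 2 * θ₂))
    have hev : pd2 Ψ =ᶠ[𝓝 p] fun q => f₂ q * (θ₁ ^ 2 * θ₂ + 2 * θ₂ + θ₂ * Ψ q) :=
      Filter.eventually_of_mem hUp hΨ₂
    rw [pd1, (hD.congr_of_eventuallyEq hev).fderiv]
    simp [pd1]
  rw [h₂₁, h₁₂, hΨ₁ p hp, hΨ₂ p hp] at hsymm
  apply mul_left_cancel₀ (mul_ne_zero (hf₁0 p hp) (hf₂0 p hp))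
  linear_combination (-2 / 3) * hsymm
    + (2 / 3) * (θ₁ * θ₂ ^ 2 + 2 * θ₁ - θ₁ * Ψ p) * hE1 p hp
    - (2 / 3) * (θ₁ ^ 2 * θ₂ + 2 * θ₂ + θ₂ * Ψ p) * hE2 p hp
end

section
/- Let U ⊆ ℝ² be open, let f₁, f₂, θ₂, Ψ : U → ℝ be smooth with f₁, f₂ nowhere zero, and suppose θ₁ ≡ 0 on U (the canal-surface case). Set ξᵢ(g) = (1/fᵢ)∂ᵢg, b = 0 and c = ξ₁(θ₂) (the values of b = -θ₁θ₂ + ξ₂(θ₁) and c = θ₁θ₂ + ξ₁(θ₂) when θ₁ ≡ 0), and assume the structural equations (E1) ∂₂f₁ + (1/2)f₁f₂θ₂ = 0, (E2) ∂₁f₂ = 0, (E3) f₁∂₂Ψ - f₂∂₁c - f₁f₂·θ₂(Ψ+2) = 0, (E4) f₂∂₁Ψ = 0 hold on U. Then at every point p ∈ U where ξ₁(θ₂)(p) ≠ 0, one has Ψ(p) = -2 - ξ₁(ξ₁(ξ₁(θ₂)))(p) / ξ₁(θ₂)(p). -/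
open scoped Topology

/-- The first-order differential operator ξ₁(g) = (1/f₁)∂₁g. -/
noncomputable def xi1 (f₁ g : ℝ × ℝ → ℝ) : ℝ × ℝ → ℝ := fun p => (1 / f₁ p) * pd1 g p

/-- The first-order differential operator ξ₂(g) = (1/f₂)∂₂g. -/
noncomputable def xi2 (f₂ g : ℝ × ℝ → ℝ) : ℝ × ℝ → ℝ := fun p => (1 / f₂ p) * pd2 g p

/-- `∂₁` only depends on the germ of the function. -/
theorem Filter.EventuallyEq.pd1_eq {g h : ℝ × ℝ → ℝ} {p : ℝ × ℝ} (hgh : g =ᶠ[𝓝 p] h) :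
    pd1 g p = pd1 h p := by
  simp only [pd1, hgh.fderiv_eq]

/-- `∂₂` only depends on the germ of the function. -/
theorem Filter.EventuallyEq.pd2_eq {g h : ℝ × ℝ → ℝ} {p : ℝ × ℝ} (hgh : g =ᶠ[𝓝 p] h) :
    pd2 g p = pd2 h p := by
  simp only [pd2, hgh.fderiv_eq]

theorem ContDiffAt.differentiableAt_fderiv_real {g : ℝ × ℝ → ℝ} {p : ℝ × ℝ}
    (hg : ContDiffAt ℝ 2 g p) : DifferentiableAt ℝ (fderiv ℝ g) p :=
  (hg.fderiv_right (m := 1) (by norm_num)).differentiableAt one_ne_zero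

theorem ContDiffAt.differentiableAt_pd2 {g : ℝ × ℝ → ℝ} {p : ℝ × ℝ}
    (hg : ContDiffAt ℝ 2 g p) : DifferentiableAt ℝ (pd2 g) p :=
  hg.differentiableAt_fderiv_real.clm_apply (differentiableAt_const _)

/-- The mixed partial derivatives of a `C²` function agree. -/
theorem ContDiffAt.pd1_pd2_comm {g : ℝ × ℝ → ℝ} {p : ℝ × ℝ} (hg : ContDiffAt ℝ 2 g p) :
    pd1 (pd2 g) p = pd2 (pd1 g) p := by
  have hd := hg.differentiableAt_fderiv_real
  have key (v w : ℝ × ℝ) :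
      fderiv ℝ (fun q => fderiv ℝ g q v) p w = fderiv ℝ (fderiv ℝ g) p w v := by
    rw [fderiv_clm_apply hd (differentiableAt_const v)]
    simp
  exact (key _ _).trans (((hg.isSymmSndFDerivAt (by simp)) _ _).trans (key _ _).symm)

theorem pd1_mul {g h : ℝ × ℝ → ℝ} {p : ℝ × ℝ} (hg : DifferentiableAt ℝ g p)
    (hh : DifferentiableAt ℝ h p) :
    pd1 (fun q => g q * h q) p = g p * pd1 h p + h p * pd1 g p := by
  simp [pd1, fderiv_fun_mul hg hh]

/-- On a canal surface (θ₁ ≡ 0), the structural equations imply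
Ψ = -2 - ξ₁³(θ₂)/ξ₁(θ₂) at every point where ξ₁(θ₂) ≠ 0. -/
theorem psi_on_canal_surface
    (U : Set (ℝ × ℝ)) (hU : IsOpen U)
    (f₁ f₂ θ₂ Ψ : ℝ × ℝ → ℝ)
    (hf₁ : ContDiffOn ℝ (⊤ : ℕ∞) f₁ U) (hf₂ : ContDiffOn ℝ (⊤ : ℕ∞) f₂ U)
    (hθ₂ : ContDiffOn ℝ (⊤ : ℕ∞) θ₂ U) (hΨ : ContDiffOn ℝ (⊤ : ℕ∞) Ψ U)
    (hf₁0 : ∀ p ∈ U, f₁ p ≠ 0) (hf₂0 : ∀ p ∈ U, f₂ p ≠ 0)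
    (hE1 : ∀ p ∈ U, pd2 f₁ p + (1 / 2) * f₁ p * f₂ p * θ₂ p = 0)
    (hE2 : ∀ p ∈ U, pd1 f₂ p = 0)
    (hE3 : ∀ p ∈ U, f₁ p * pd2 Ψ p - f₂ p * pd1 (xi1 f₁ θ₂) p
      - f₁ p * f₂ p * (θ₂ p * (Ψ p + 2)) = 0)
    (hE4 : ∀ p ∈ U, f₂ p * pd1 Ψ p = 0) :
    ∀ p ∈ U, xi1 f₁ θ₂ p ≠ 0 →
      Ψ p = -2 - xi1 f₁ (xi1 f₁ (xi1 f₁ θ₂)) p / xi1 f₁ θ₂ p := by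
  intro p hp hc
  have hUp : U ∈ 𝓝 p := hU.mem_nhds hp
  have hΨ2 : ContDiffAt ℝ 2 Ψ p :=
    (hΨ.contDiffAt hUp).of_le (WithTop.coe_le_coe.mpr le_top)
  have hdΨ : DifferentiableAt ℝ Ψ p := hΨ2.differentiableAt two_ne_zero
  have hdθ : DifferentiableAt ℝ θ₂ p :=
    (hθ₂.contDiffAt hUp).differentiableAt (by simp)
  have hdf₂ : DifferentiableAt ℝ f₂ p :=
    (hf₂.contDiffAt hUp).differentiableAt (by simp)
  have hΨ1 : ∀ q ∈ U, pd1 Ψ q = 0 := fun q hq =>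
    (mul_eq_zero.mp (hE4 q hq)).resolve_left (hf₂0 q hq)
  have hmixed : pd1 (pd2 Ψ) p = 0 := by
    have hz : pd1 Ψ =ᶠ[𝓝 p] fun _ => 0 := Filter.eventually_of_mem hUp hΨ1
    rw [hΨ2.pd1_pd2_comm, hz.pd2_eq]
    simp [pd2]
  -- `hE3` divided by `f₁ f₂`; both sides are then differentiated along the first coordinate.
  have hξξ : ∀ q ∈ U, xi1 f₁ (xi1 f₁ θ₂) q =
      (f₂ q)⁻¹ * pd2 Ψ q - θ₂ q * (Ψ q + 2) := by
    intro q hq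
    have h1 := hf₁0 q hq
    have h2 := hf₂0 q hq
    have h3 := hE3 q hq
    rw [xi1]
    field_simp
    linear_combination -h3
  have hdinv : DifferentiableAt ℝ (fun q => (f₂ q)⁻¹) p := hdf₂.inv (hf₂0 p hp)
  have hinv : pd1 (fun q => (f₂ q)⁻¹) p = 0 := by
    have h := pd1_mul hdf₂ hdinv
    have hone : (fun q => f₂ q * (f₂ q)⁻¹) =ᶠ[𝓝 p] fun _ => 1 :=
      Filter.eventually_of_mem hUp fun q hq => mul_inv_cancel₀ (hf₂0 q hq)
    rw [hone.pd1_eq, hE2 p hp] at h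
    simpa [pd1, hf₂0 p hp] using h
  have hξ : pd1 (xi1 f₁ (xi1 f₁ θ₂)) p = -(Ψ p + 2) * pd1 θ₂ p := by
    have hsub : pd1 (fun q => (f₂ q)⁻¹ * pd2 Ψ q - θ₂ q * (Ψ q + 2)) p =
        pd1 (fun q => (f₂ q)⁻¹ * pd2 Ψ q) p - pd1 (fun q => θ₂ q * (Ψ q + 2)) p := by
      simp only [pd1]
      rw [fderiv_fun_sub (hdinv.fun_mul hΨ2.differentiableAt_pd2) (hdθ.fun_mul (hdΨ.add_const 2))]
      rfl
    have hadd : pd1 (fun q => Ψ q + 2) p = 0 := by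
      simpa [pd1] using hΨ1 p hp
    rw [Filter.EventuallyEq.pd1_eq (Filter.eventually_of_mem hUp hξξ), hsub,
      pd1_mul hdinv hΨ2.differentiableAt_pd2, pd1_mul hdθ (hdΨ.add_const 2), hmixed, hinv, hadd]
    ring
  have hquot : xi1 f₁ (xi1 f₁ (xi1 f₁ θ₂)) p = -(Ψ p + 2) * xi1 f₁ θ₂ p := by
    rw [xi1, hξ, xi1]
    ring
  rw [hquot, mul_div_cancel_right₀ _ hc]
  ring
end

section
/- Let θ₁, θ₂, Ψ, a, b, c, d, Ψ_C be real numbers with θ₂ ≠ 0. Let F, G : ℝ² → ℝ be C⁵ functions whose degree-4 Taylor polynomials at the origin are, respectively, P(x,y) = (1/2)(x² - y²) + (1/6)(θ₁x³ + θ₂y³) + (1/24)(ax⁴ + 4bx³y + 6Ψx²y² + 4cxy³ + dy⁴) and Q(x,y) = (1/2)(x² - y²) + (1/8)(x⁴ - y⁴) + (1/6)Ψ_C x²y². Then for a real number t, the function x ↦ F(x, tx) - G(x, tx) is O(x⁴) as x → 0 (i.e., the surface and the cyclide are tangent of order 3 along the line y = tx) if and only if θ₁ + θ₂t³ = 0;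 consequently there is exactly one such direction, namely t = -(θ₁/θ₂)^{1/3} (the unique real cube root). -/
open Asymptotics Filter
open scoped Topology

/-- Degree-4 Taylor polynomial of a surface in standard position at a non-umbilical point. -/
noncomputable def surfP (θ₁ θ₂ Ψ a b c d : ℝ) (x y : ℝ) : ℝ :=
  (1 / 2) * (x ^ 2 - y ^ 2) + (1 / 6) * (θ₁ * x ^ 3 + θ₂ * y ^ 3)
    + (1 / 24) * (a * x ^ 4 + 4 * b * x ^ 3 * y + 6 * Ψ * x ^ 2 * y ^ 2
        + 4 * c * x * y ^ 3 + d * y ^ 4)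

/-- Degree-4 Taylor polynomial of a Dupin cyclide in standard position. -/
noncomputable def cyclQ (Ψc : ℝ) (x y : ℝ) : ℝ :=
  (1 / 2) * (x ^ 2 - y ^ 2) + (1 / 8) * (x ^ 4 - y ^ 4) + (1 / 6) * Ψc * x ^ 2 * y ^ 2

/-- A function of order five at the origin of the plane is of order four along the line
`y = t * x`. -/
lemma isBigO_pow_four_of_isBigO_norm_pow_five {H : ℝ × ℝ → ℝ}
    (hH : H =O[𝓝 (0 : ℝ × ℝ)] fun p => ‖p‖ ^ 5) (t : ℝ) :
    (fun x : ℝ => H (x, t * x)) =O[𝓝 (0 : ℝ)] fun x => x ^ 4 := by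
  have hline : Tendsto (fun x : ℝ => (x, t * x)) (𝓝 0) (𝓝 (0 : ℝ × ℝ)) := by
    have hcont : Continuous fun x : ℝ => (x, t * x) := by fun_prop
    simpa [Prod.zero_eq_mk] using hcont.tendsto 0
  have hid : (fun x : ℝ => x) =O[𝓝 (0 : ℝ)] fun x => x := isBigO_refl _ _
  have hnorm : (fun x : ℝ => ‖(x, t * x)‖) =O[𝓝 (0 : ℝ)] fun x => x :=
    (hid.prod_left (hid.const_mul_left t)).norm_left
  exact ((hH.comp_tendsto hline).trans (hnorm.pow 5)).trans
    (isLittleO_pow_pow (by norm_num)).isBigO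

lemma const_mul_pow_isBigO_pow_iff {m n : ℕ} (hmn : m < n) (k : ℝ) :
    ((fun x : ℝ => k * x ^ m) =O[𝓝 (0 : ℝ)] fun x => x ^ n) ↔ k = 0 := by
  refine ⟨fun h => ?_, fun hk => by simpa [hk] using isBigO_zero _ _⟩
  by_contra hk
  have hself : (fun x : ℝ => x ^ m) =o[𝓝 (0 : ℝ)] fun x => x ^ m :=
    ((isBigO_const_mul_left_iff hk).1 h).trans_isLittleO (isLittleO_pow_pow hmn)
  have hfreq : ∃ᶠ x : ℝ in 𝓝 0, x ^ m ≠ 0 :=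
    (eventually_mem_nhdsWithin.frequently.filter_mono
      (nhdsWithin_le_nhds (s := {(0 : ℝ)}ᶜ))).mono fun x hx => pow_ne_zero m hx
  exact isLittleO_irrefl hfreq hself

lemma existsUnique_pow_eq_of_odd {n : ℕ} (hn : Odd n) (c : ℝ) : ∃! t : ℝ, t ^ n = c := by
  have hroot : ∀ r : ℝ, 0 ≤ r → ∃ t : ℝ, t ^ n = r := fun r hr =>
    ⟨r ^ (n⁻¹ : ℝ), Real.rpow_inv_natCast_pow hr hn.pos.ne'⟩
  obtain ⟨t, ht⟩ : ∃ t : ℝ, t ^ n = c := by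
    rcases le_total 0 c with hc | hc
    · exact hroot c hc
    · obtain ⟨t, ht⟩ := hroot (-c) (neg_nonneg.2 hc)
      exact ⟨-t, by rw [hn.neg_pow, ht, neg_neg]⟩
  exact ⟨t, ht, fun s hs => hn.pow_injective (hs.trans ht.symm)⟩

/-- Along the line `y = t * x` the Taylor polynomials of the surface and of the cyclide differ
by their cubic part up to fourth order. -/
lemma surfP_sub_cyclQ_isBigO (θ₁ θ₂ Ψ a b c d Ψc t : ℝ) :
    (fun x : ℝ => surfP θ₁ θ₂ Ψ a b c d x (t * x) - cyclQ Ψc x (t * x)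
      - (θ₁ + θ₂ * t ^ 3) / 6 * x ^ 3) =O[𝓝 (0 : ℝ)] fun x => x ^ 4 := by
  refine ((isBigO_refl (fun x : ℝ => x ^ 4) (𝓝 0)).const_mul_left
    ((1 / 24) * (a + 4 * b * t + 6 * Ψ * t ^ 2 + 4 * c * t ^ 3 + d * t ^ 4)
      - (1 / 8) * (1 - t ^ 4) - (1 / 6) * Ψc * t ^ 2)).congr_left fun x => ?_
  simp only [surfP, cyclQ]
  ring

/-- A surface and a cyclide in standard position are tangent of order 3 along the
line y = tx if and only if θ₁ + θ₂t³ = 0; there is exactly one such direction,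
namely the one with t³ = -θ₁/θ₂. -/
theorem order_three_tangency_direction
    (θ₁ θ₂ Ψ a b c d Ψc : ℝ) (hθ₂ : θ₂ ≠ 0)
    (F G : ℝ × ℝ → ℝ) (hF : ContDiff ℝ 5 F) (hG : ContDiff ℝ 5 G)
    (hFP : (fun p : ℝ × ℝ => F p - surfP θ₁ θ₂ Ψ a b c d p.1 p.2)
      =O[𝓝 (0 : ℝ × ℝ)] fun p => ‖p‖ ^ 5)
    (hGQ : (fun p : ℝ × ℝ => G p - cyclQ Ψc p.1 p.2)
      =O[𝓝 (0 : ℝ × ℝ)] fun p => ‖p‖ ^ 5) :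
    (∀ t : ℝ,
        ((fun x : ℝ => F (x, t * x) - G (x, t * x)) =O[𝓝 (0 : ℝ)] fun x => x ^ 4)
          ↔ θ₁ + θ₂ * t ^ 3 = 0) ∧
    (∃! t : ℝ,
        (fun x : ℝ => F (x, t * x) - G (x, t * x)) =O[𝓝 (0 : ℝ)] fun x => x ^ 4) ∧
    (∀ t : ℝ,
        ((fun x : ℝ => F (x, t * x) - G (x, t * x)) =O[𝓝 (0 : ℝ)] fun x => x ^ 4)
          → t ^ 3 = -(θ₁ / θ₂)) := by
  have key : ∀ t : ℝ,
      ((fun x : ℝ => F (x, t * x) - G (x, t * x)) =O[𝓝 (0 : ℝ)] fun x => x ^ 4)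
        ↔ θ₁ + θ₂ * t ^ 3 = 0 := by
    intro t
    have hFt := isBigO_pow_four_of_isBigO_norm_pow_five hFP t
    have hGt := isBigO_pow_four_of_isBigO_norm_pow_five hGQ t
    have hrem : (fun x : ℝ => F (x, t * x) - G (x, t * x) - (θ₁ + θ₂ * t ^ 3) / 6 * x ^ 3)
        =O[𝓝 (0 : ℝ)] fun x => x ^ 4 :=
      ((hFt.sub hGt).add (surfP_sub_cyclQ_isBigO θ₁ θ₂ Ψ a b c d Ψc t)).congr_left
        fun x => by ring
    have hcubic := const_mul_pow_isBigO_pow_iff (m := 3) (n := 4) (by norm_num)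
      ((θ₁ + θ₂ * t ^ 3) / 6)
    rw [div_eq_zero_iff, or_iff_left (by norm_num)] at hcubic
    rw [← hcubic]
    exact ⟨fun h => (h.sub hrem).congr_left fun x => by ring,
      fun h => (hrem.add h).congr_left fun x => by ring⟩
  have hcube : ∀ t : ℝ, θ₁ + θ₂ * t ^ 3 = 0 ↔ t ^ 3 = -(θ₁ / θ₂) := by
    intro t
    rw [← neg_div, eq_div_iff hθ₂]
    constructor <;> intro h <;> linarith
  refine ⟨key, ?_, fun t ht => (hcube t).1 ((key t).1 ht)⟩
  simp only [key, hcube]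
  exact existsUnique_pow_eq_of_odd (by decide) _
end

section
/- Let θ₁, θ₂, Ψ, a, b, c, d be real numbers with θ₁ ≠ 0 and θ₂ ≠ 0, and let t be the unique real number with θ₁ + θ₂t³ = 0 (so t ≠ 0). Let F : ℝ² → ℝ be a C⁵ function whose degree-4 Taylor polynomial at the origin is P(x,y) = (1/2)(x² - y²) + (1/6)(θ₁x³ + θ₂y³) + (1/24)(ax⁴ + 4bx³y + 6Ψx²y² + 4cxy³ + dy⁴). Then there exists exactly one real number Ψ_C such that for every C⁵ function G : ℝ² → ℝ whose degree-4 Taylor polynomial at the origin is Q(x,y) = (1/2)(x² - y²) + (1/8)(x⁴ - y⁴) + (1/6)Ψ_C x²y², the function x ↦ F(x, tx) - G(x, tx) is o(x⁴) as x → 0 (tangency of order 4 along the line y = tx); this Ψ_C is the unique solution of (1/24)(a + 4bt + 6Ψt² + 4ct³ + dt⁴) = (1/8)(1 - t⁴) + (1/6)Ψ_C t². -/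
open Asymptotics Filter
open scoped Topology

/-- Restricting an `O(‖p‖ ^ 5)` estimate at the origin of the plane to the line `y = t * x`. -/
lemma isLittleO_restrict_line {f : ℝ × ℝ → ℝ}
    (hf : f =O[𝓝 (0 : ℝ × ℝ)] fun p => ‖p‖ ^ 5) (t : ℝ) :
    (fun x : ℝ => f (x, t * x)) =o[𝓝 (0 : ℝ)] fun x => x ^ 4 := by
  have hline : Tendsto (fun x : ℝ => ((x, t * x) : ℝ × ℝ)) (𝓝 0) (𝓝 0) := by
    have hcont : Continuous fun x : ℝ => ((x, t * x) : ℝ × ℝ) := by fun_prop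
    exact hcont.tendsto' 0 0 (by simp)
  have hnorm : (fun x : ℝ => ‖((x, t * x) : ℝ × ℝ)‖) =O[𝓝 0] fun x : ℝ => x :=
    ((isBigO_refl _ _).prod_left ((isBigO_refl _ _).const_mul_left t)).norm_left
  exact ((hf.comp_tendsto hline).trans (hnorm.pow 5)).trans_isLittleO
    (isLittleO_pow_pow (by norm_num))

/-- A monomial `k * x ^ n` is `o(x ^ n)` at the origin iff its coefficient vanishes. -/
lemma const_mul_pow_isLittleO_iff {k : ℝ} {n : ℕ} :
    (fun x : ℝ => k * x ^ n) =o[𝓝 (0 : ℝ)] (fun x => x ^ n) ↔ k = 0 := by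
  refine ⟨fun h => ?_, fun h => by simp [h]⟩
  by_contra hk
  have hself := ((isLittleO_const_mul_left_iff hk).1 h).mono
    (nhdsWithin_le_nhds (s := {0}ᶜ))
  refine isLittleO_irrefl (Eventually.frequently ?_) hself
  filter_upwards [self_mem_nhdsWithin] with x hx
  exact pow_ne_zero n hx

/-- Along `y = t * x` with `θ₁ + θ₂ * t ^ 3 = 0`, the surface and a cyclide agree to order 4 iff
their quartic coefficients agree. -/
lemma tangent_order_four_iff {θ₁ θ₂ Ψ a b c d t Ψc : ℝ} (ht : θ₁ + θ₂ * t ^ 3 = 0)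
    {F G : ℝ × ℝ → ℝ}
    (hF : (fun p : ℝ × ℝ => F p - surfP θ₁ θ₂ Ψ a b c d p.1 p.2)
      =O[𝓝 (0 : ℝ × ℝ)] fun p => ‖p‖ ^ 5)
    (hG : (fun p : ℝ × ℝ => G p - cyclQ Ψc p.1 p.2) =O[𝓝 (0 : ℝ × ℝ)] fun p => ‖p‖ ^ 5) :
    (fun x : ℝ => F (x, t * x) - G (x, t * x)) =o[𝓝 (0 : ℝ)] (fun x => x ^ 4) ↔
      (1 / 24) * (a + 4 * b * t + 6 * Ψ * t ^ 2 + 4 * c * t ^ 3 + d * t ^ 4)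
        = (1 / 8) * (1 - t ^ 4) + (1 / 6) * Ψc * t ^ 2 := by
  have hrem := isLittleO_restrict_line (hF.sub hG) t
  rw [← sub_eq_zero, ← const_mul_pow_isLittleO_iff (n := 4)]
  have hsplit (x : ℝ) :
      surfP θ₁ θ₂ Ψ a b c d x (t * x) - cyclQ Ψc x (t * x) =
        ((1 / 24) * (a + 4 * b * t + 6 * Ψ * t ^ 2 + 4 * c * t ^ 3 + d * t ^ 4)
          - ((1 / 8) * (1 - t ^ 4) + (1 / 6) * Ψc * t ^ 2)) * x ^ 4 := by
    unfold surfP cyclQ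
    linear_combination (1 / 6) * x ^ 3 * ht
  simp only [← hsplit]
  constructor
  · intro h
    exact (h.sub hrem).congr_left fun x => by ring
  · intro h
    exact (h.add hrem).congr_left fun x => by ring

/-- The polynomial cyclide is itself an admissible `C⁵` function. -/
lemma contDiff_cyclQ (Ψc : ℝ) : ContDiff ℝ 5 fun p : ℝ × ℝ => cyclQ Ψc p.1 p.2 := by
  unfold cyclQ
  fun_prop

/-- At a non-canal point there is exactly one osculating cyclide: exactly one value of
Ψ_C for which the cyclide is tangent of order 4 to the surface along the direction
y = tx with θ₁ + θ₂t³ = 0, and this Ψ_C solves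
(1/24)(a + 4bt + 6Ψt² + 4ct³ + dt⁴) = (1/8)(1 - t⁴) + (1/6)Ψ_C t². -/
theorem unique_osculating_cyclide
    (θ₁ θ₂ Ψ a b c d : ℝ) (hθ₁ : θ₁ ≠ 0) (hθ₂ : θ₂ ≠ 0)
    (t : ℝ) (ht : θ₁ + θ₂ * t ^ 3 = 0)
    (F : ℝ × ℝ → ℝ) (hF : ContDiff ℝ 5 F)
    (hFP : (fun p : ℝ × ℝ => F p - surfP θ₁ θ₂ Ψ a b c d p.1 p.2)
      =O[𝓝 (0 : ℝ × ℝ)] fun p => ‖p‖ ^ 5) :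
    (∃! Ψc : ℝ, ∀ G : ℝ × ℝ → ℝ, ContDiff ℝ 5 G →
        ((fun p : ℝ × ℝ => G p - cyclQ Ψc p.1 p.2) =O[𝓝 (0 : ℝ × ℝ)] fun p => ‖p‖ ^ 5) →
        (fun x : ℝ => F (x, t * x) - G (x, t * x)) =o[𝓝 (0 : ℝ)] fun x => x ^ 4) ∧
    (∀ Ψc : ℝ,
        (∀ G : ℝ × ℝ → ℝ, ContDiff ℝ 5 G →
          ((fun p : ℝ × ℝ => G p - cyclQ Ψc p.1 p.2) =O[𝓝 (0 : ℝ × ℝ)] fun p => ‖p‖ ^ 5) →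
          (fun x : ℝ => F (x, t * x) - G (x, t * x)) =o[𝓝 (0 : ℝ)] fun x => x ^ 4) →
        (1 / 24) * (a + 4 * b * t + 6 * Ψ * t ^ 2 + 4 * c * t ^ 3 + d * t ^ 4)
          = (1 / 8) * (1 - t ^ 4) + (1 / 6) * Ψc * t ^ 2) := by
  have ht0 : t ≠ 0 := by
    rintro rfl
    exact hθ₁ (by simpa using ht)
  have quartic_of_tangent : ∀ Ψc : ℝ,
      (∀ G : ℝ × ℝ → ℝ, ContDiff ℝ 5 G →
        ((fun p : ℝ × ℝ => G p - cyclQ Ψc p.1 p.2) =O[𝓝 (0 : ℝ × ℝ)] fun p => ‖p‖ ^ 5) →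
        (fun x : ℝ => F (x, t * x) - G (x, t * x)) =o[𝓝 (0 : ℝ)] fun x => x ^ 4) →
      (1 / 24) * (a + 4 * b * t + 6 * Ψ * t ^ 2 + 4 * c * t ^ 3 + d * t ^ 4)
        = (1 / 8) * (1 - t ^ 4) + (1 / 6) * Ψc * t ^ 2 := by
    intro Ψc h
    have hQ : (fun p : ℝ × ℝ => cyclQ Ψc p.1 p.2 - cyclQ Ψc p.1 p.2)
        =O[𝓝 (0 : ℝ × ℝ)] fun p => ‖p‖ ^ 5 := by
      simpa using isBigO_zero (fun p : ℝ × ℝ => ‖p‖ ^ 5) (𝓝 0)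
    exact (tangent_order_four_iff ht hFP hQ).1 (h _ (contDiff_cyclQ Ψc) hQ)
  refine ⟨⟨6 * ((1 / 24) * (a + 4 * b * t + 6 * Ψ * t ^ 2 + 4 * c * t ^ 3 + d * t ^ 4)
      - (1 / 8) * (1 - t ^ 4)) / t ^ 2, fun G _ hG => ?_, fun Ψc h => ?_⟩, quartic_of_tangent⟩
  · refine (tangent_order_four_iff ht hFP hG).2 ?_
    field_simp
    ring
  · rw [eq_div_iff (pow_ne_zero 2 ht0)]
    linear_combination -6 * quartic_of_tangent Ψc h
end

section
/- Let θ₁, θ₂ : ℝ → ℝ be continuously differentiable and let α : ℝ → ℝ be twice continuously differentiable, and suppose that on a neighborhood of σ₀ ∈ ℝ the Darboux-line equation 12·sin(α(σ))·cos(α(σ))·α'(σ) = θ₁(σ)·cos³(α(σ)) + θ₂(σ)·sin³(α(σ)) holds, with sin(α(σ₀))·cos(α(σ₀)) ≠ 0. Then: (i) α'(σ₀) = 0 if and only if θ₁(σ₀)cos³(α(σ₀)) + θ₂(σ₀)sin³(α(σ₀)) = 0, i.e. (when θ₂(σ₀) ≠ 0) if and only if tan³(α(σ₀)) = -θ₁(σ₀)/θ₂(σ₀);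 (ii) if moreover α'(σ₀) = 0 and the derivative of σ ↦ θ₁(σ)cos³(α(σ)) + θ₂(σ)sin³(α(σ)) at σ₀ is nonzero, then α attains a strict local extremum at σ₀. -/
open Real Filter
open scoped Topology

/-- Strict second-derivative test, minimum version: at a critical point with positive second
derivative a differentiable function has a strict local minimum. -/
theorem eventually_lt_of_deriv_deriv_pos {f : ℝ → ℝ} {a : ℝ} (hf : Differentiable ℝ f)
    (hpos : 0 < deriv (deriv f) a) (hcrit : deriv f a = 0) :
    ∀ᶠ x in 𝓝[≠] a, f a < f x := by
  have hsign := eventually_nhdsWithin_sign_eq_of_deriv_pos hpos hcrit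
  obtain ⟨ε, hε, hball⟩ := Metric.eventually_nhds_iff_ball.mp hsign
  rw [Real.ball_eq_Ioo] at hball
  have hanti : StrictAntiOn f (Set.Ioc (a - ε) a) := by
    refine strictAntiOn_of_deriv_neg (convex_Ioc _ _) hf.continuous.continuousOn fun x hx => ?_
    rw [interior_Ioc] at hx
    have h := hball x ⟨hx.1, by linarith [hx.2]⟩
    rwa [sign_neg (sub_neg.mpr hx.2), sign_eq_neg_one_iff] at h
  have hmono : StrictMonoOn f (Set.Ico a (a + ε)) := by
    refine strictMonoOn_of_deriv_pos (convex_Ico _ _) hf.continuous.continuousOn fun x hx => ?_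
    rw [interior_Ico] at hx
    have h := hball x ⟨by linarith [hx.1], hx.2⟩
    rwa [sign_pos (sub_pos.mpr hx.1), sign_eq_one_iff] at h
  filter_upwards [self_mem_nhdsWithin, mem_nhdsWithin_of_mem_nhds
    (Ioo_mem_nhds (sub_lt_self a hε) (lt_add_of_pos_right a hε))] with x hne hx
  rcases lt_or_gt_of_ne hne with hlt | hgt
  · exact hanti ⟨hx.1, hlt.le⟩ ⟨by linarith, le_rfl⟩ hlt
  · exact hmono ⟨le_rfl, by linarith⟩ ⟨hgt.le, hx.2⟩ hgt

/-- Strict second-derivative test, maximum version: at a critical point with negative second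
derivative a differentiable function has a strict local maximum. -/
theorem eventually_gt_of_deriv_deriv_neg {f : ℝ → ℝ} {a : ℝ} (hf : Differentiable ℝ f)
    (hneg : deriv (deriv f) a < 0) (hcrit : deriv f a = 0) :
    ∀ᶠ x in 𝓝[≠] a, f x < f a := by
  have hderiv : deriv (-f) = -deriv f := by
    ext x
    simp [deriv.neg]
  have h := eventually_lt_of_deriv_deriv_pos (f := -f) (a := a) hf.neg
    (by rw [hderiv, deriv.neg]; linarith) (by simp [hderiv, hcrit])
  filter_upwards [h] with x hx
  simpa using hx

/-- Along a Darboux line, critical points of the angle α with the curvature lines are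
exactly the points where θ₁cos³α + θ₂sin³α = 0 (the Dupin directions), and generically
such critical points are strict local extrema of α. -/
theorem dupin_darboux_critical_angle
    (θ₁ θ₂ : ℝ → ℝ) (α : ℝ → ℝ) (σ₀ : ℝ)
    (hθ₁ : ContDiff ℝ 1 θ₁) (hθ₂ : ContDiff ℝ 1 θ₂) (hα : ContDiff ℝ 2 α)
    (hode : ∀ᶠ σ in 𝓝 σ₀,
      12 * Real.sin (α σ) * Real.cos (α σ) * deriv α σ
        = θ₁ σ * Real.cos (α σ) ^ 3 + θ₂ σ * Real.sin (α σ) ^ 3)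
    (hsc : Real.sin (α σ₀) * Real.cos (α σ₀) ≠ 0) :
    (deriv α σ₀ = 0 ↔ θ₁ σ₀ * Real.cos (α σ₀) ^ 3 + θ₂ σ₀ * Real.sin (α σ₀) ^ 3 = 0) ∧
    (θ₂ σ₀ ≠ 0 →
      (deriv α σ₀ = 0 ↔ Real.tan (α σ₀) ^ 3 = -(θ₁ σ₀ / θ₂ σ₀))) ∧
    (deriv α σ₀ = 0 →
      deriv (fun σ => θ₁ σ * Real.cos (α σ) ^ 3 + θ₂ σ * Real.sin (α σ) ^ 3) σ₀ ≠ 0 →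
      ((∀ᶠ σ in 𝓝[≠] σ₀, α σ < α σ₀) ∨ (∀ᶠ σ in 𝓝[≠] σ₀, α σ₀ < α σ))) := by
  have hs : Real.sin (α σ₀) ≠ 0 := left_ne_zero_of_mul hsc
  have hc : Real.cos (α σ₀) ≠ 0 := right_ne_zero_of_mul hsc
  have hcoef : 12 * Real.sin (α σ₀) * Real.cos (α σ₀) ≠ 0 := by
    rw [mul_assoc]
    exact mul_ne_zero (by norm_num) hsc
  have hcrit : deriv α σ₀ = 0 ↔
      θ₁ σ₀ * Real.cos (α σ₀) ^ 3 + θ₂ σ₀ * Real.sin (α σ₀) ^ 3 = 0 := by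
    rw [← hode.self_of_nhds, mul_eq_zero, or_iff_right hcoef]
  refine ⟨hcrit, fun hθ => ?_, fun h0 hne => ?_⟩
  · rw [hcrit, Real.tan_eq_sin_div_cos, div_pow, ← neg_div,
      div_eq_div_iff (pow_ne_zero 3 hc) hθ]
    constructor <;> intro h <;> linarith
  · have hα1 : Differentiable ℝ α := hα.differentiable (by norm_num)
    have hα2 : Differentiable ℝ (deriv α) := hα.differentiable_deriv_two
    have hprod : deriv (fun σ => 12 * Real.sin (α σ) * Real.cos (α σ) * deriv α σ) σ₀
        = 12 * Real.sin (α σ₀) * Real.cos (α σ₀) * deriv (deriv α) σ₀ := by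
      rw [deriv_fun_mul (by fun_prop) (hα2 σ₀), h0, mul_zero, zero_add]
    rw [← Filter.EventuallyEq.deriv_eq hode, hprod] at hne
    rcases lt_or_gt_of_ne (right_ne_zero_of_mul hne) with hneg | hpos
    · exact Or.inl (eventually_gt_of_deriv_deriv_neg hα1 hneg h0)
    · exact Or.inr (eventually_lt_of_deriv_deriv_pos hα1 hpos h0)
end
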